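/- If (1, b, b+1) is an abc triple (with b a positive integer), then (1, b^k, b^k + 1) is an abc triple for each positive odd integer k. -/

import Mathlib

open scoped Classical

/-- The radical of a natural number: the product of its distinct prime factors. -/
def rad (n : ℕ) : ℕ := ∏ p ∈ n.primeFactors, p

/-- The cosocle of a natural number: `n / rad n`. -/
def cosocle (n : ℕ) : ℕ := n / rad n

/-- `(a, b, c)` is an abc triple: `a, b, c` are relatively prime positive integers with
`a + b = c` and `rad (a*b*c) < c`. -/
def IsABCTriple (a b c : ℕ) : Prop :=
  0 < a ∧ 0 < b ∧ 0 < c ∧ a + b = c ∧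
    Nat.Coprime a b ∧ Nat.Coprime a c ∧ Nat.Coprime b c ∧ rad (a * b * c) < c

/-!
For odd `k`, write `a ^ k + b ^ k = (a + b) * m`. Raising `a` and `b` to the power `k` does not
change their prime factors, so passing to `k`-th powers multiplies the radical of the triple by at
most `m`, while it multiplies the sum by exactly `m`.
-/

theorem rad_eq_radical (n : ℕ) : rad n = UniqueFactorizationMonoid.radical n :=
  Nat.radical_eq_prod_primeFactors.symm

open UniqueFactorizationMonoid in
theorem rad_mul_le_rad_mul (m : ℕ) {n : ℕ} (hn : n ≠ 0) : rad (m * n) ≤ rad m * n := by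
  simp only [rad_eq_radical]
  calc radical (m * n)
    _ ≤ radical m * radical n :=
      Nat.le_of_dvd (Nat.mul_pos (Nat.radical_pos m) (Nat.radical_pos n)) radical_mul_dvd
    _ ≤ radical m * n :=
      Nat.mul_le_mul_left _ (Nat.radical_le_self_iff.2 hn)

theorem rad_pow_mul {k : ℕ} (hk : k ≠ 0) (m n : ℕ) : rad (m ^ k * n) = rad (m * n) := by
  rcases eq_or_ne m 0 with rfl | hm
  · rw [zero_pow hk]
  rcases eq_or_ne n 0 with rfl | hn
  · rw [mul_zero, mul_zero]
  rw [rad, rad, Nat.primeFactors_mul (pow_ne_zero k hm) hn, Nat.primeFactors_mul hm hn,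
    Nat.primeFactors_pow m hk]

theorem stmt_5_general {a b c k : ℕ} (hk : Odd k) (h : IsABCTriple a b c) :
    IsABCTriple (a ^ k) (b ^ k) (a ^ k + b ^ k) := by
  obtain ⟨ha, hb, -, rfl, hab, -, -, hrad⟩ := h
  have hab_pow : Nat.Coprime (a ^ k) (b ^ k) := hab.pow k k
  have hsum_pos : 0 < a ^ k + b ^ k := by positivity
  refine ⟨pow_pos ha k, pow_pos hb k, hsum_pos, rfl, hab_pow,
    Nat.coprime_self_add_right.2 hab_pow, Nat.coprime_add_self_right.2 hab_pow.symm, ?_⟩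
  obtain ⟨m, hm⟩ : a + b ∣ a ^ k + b ^ k := hk.nat_add_dvd_pow_add_pow a b
  have hm_pos : 0 < m := Nat.pos_of_mul_pos_left (hm ▸ hsum_pos)
  calc rad (a ^ k * b ^ k * (a ^ k + b ^ k))
    _ = rad (a * b * (a + b) * m) := by
      rw [hm, ← mul_pow, rad_pow_mul hk.pos.ne', mul_assoc (a * b)]
    _ ≤ rad (a * b * (a + b)) * m := rad_mul_le_rad_mul _ hm_pos.ne'
    _ < (a + b) * m := Nat.mul_lt_mul_of_pos_right hrad hm_pos
    _ = a ^ k + b ^ k := hm.symm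

theorem stmt_5 (b : ℕ) (hb : 0 < b) (h : IsABCTriple 1 b (b + 1)) :
    ∀ k : ℕ, 0 < k → Odd k → IsABCTriple 1 (b ^ k) (b ^ k + 1) := by
  intro k _ hk
  simpa only [one_pow, add_comm 1] using stmt_5_general hk h
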